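/- arXiv:1604.02234 — 7 statements merged into one kernel-verified Lean document; each statement's English description precedes it below -/
import Mathlib

section
/- Let J be a finite index set, s₀ ≥ 0 and s_j ≥ 0 (j ∈ J) be reals, and I_out > 0, I_in > 0 be reals. Set μ = min{1, 1/I_out} and μ' = min{1, 1/I_in}. Then log₂(1 + (μ·s₀ + Σ_{j∈J} s_j)/(1 + μ'·I_in)) ≥ log₂(1 + Σ_{j∈J} s_j + s₀/(1 + I_out)) − 1. -/
/-!
With `μ = min{1, 1/I_out}` and `μ' = min{1, 1/I_in}`, the residual interference `μ' I_in` is at most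
the unit noise power, so the total noise is at most `2`; and `μ ≥ 1 / (1 + I_out)`, so the private
power `μ s₀` is at least `s₀ / (1 + I_out)`. For logarithms to base `b`, noise power at most `b`
costs at most one unit of rate.
-/

open Finset

section PrivatePower

variable {K : Type*} [Field K] [LinearOrder K] [IsStrictOrderedRing K] {x : K}

lemma min_one_one_div_mul_le_one (hx : 0 ≤ x) : min 1 (1 / x) * x ≤ 1 :=
  calc min 1 (1 / x) * x ≤ 1 / x * x := mul_le_mul_of_nonneg_right (min_le_right _ _) hx
    _ = x / x := one_div_mul_eq_div x x
    _ ≤ 1 := div_self_le_one x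

lemma one_div_one_add_le_min_one_one_div (hx : 0 < x) : 1 / (1 + x) ≤ min 1 (1 / x) :=
  le_min (div_le_one_of_le₀ (by linarith) (by linarith))
    (one_div_le_one_div_of_le hx (by linarith))

lemma div_one_add_le_min_one_one_div_mul {p : K} (hp : 0 ≤ p) (hx : 0 < x) :
    p / (1 + x) ≤ min 1 (1 / x) * p :=
  calc p / (1 + x) = 1 / (1 + x) * p := (one_div_mul_eq_div _ _).symm
    _ ≤ min 1 (1 / x) * p :=
      mul_le_mul_of_nonneg_right (one_div_one_add_le_min_one_one_div hx) hp

end PrivatePower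

lemma logb_sub_one_le_logb_of_le_base_mul {b x y : ℝ} (hb : 1 < b) (hx : 0 < x)
    (hxy : x ≤ b * y) : Real.logb b x - 1 ≤ Real.logb b y := by
  have hb₀ : 0 < b := one_pos.trans hb
  calc Real.logb b x - 1 = Real.logb b (x / b) := by
        rw [Real.logb_div hx.ne' hb₀.ne', Real.logb_self_eq_one hb]
    _ ≤ Real.logb b y :=
        Real.logb_le_logb_of_le hb (div_pos hx hb₀) ((div_le_iff₀' hb₀).2 hxy)

lemma logb_one_add_sub_one_le_logb_one_add_div {b p q d : ℝ} (hb : 1 < b) (hp : 0 ≤ p)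
    (hpq : p ≤ q) (hd : 0 < d) (hdb : d ≤ b) :
    Real.logb b (1 + p) - 1 ≤ Real.logb b (1 + q / d) := by
  have hq : 0 ≤ q / d := div_nonneg (hp.trans hpq) hd.le
  refine logb_sub_one_le_logb_of_le_base_mul hb (by positivity) ?_
  calc 1 + p ≤ 1 + q := by gcongr
    _ = 1 + d * (q / d) := by rw [mul_div_cancel₀ q hd.ne']
    _ ≤ b + b * (q / d) := by gcongr
    _ = b * (1 + q / d) := by ring

/-- one-bit gap between the inner set function `A` and the outer
set function `Ā` of the Gaussian MAC-IC-MAC, with Etkin–Tse–Wang private-power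
fractions `μ = min{1, 1/I_out}` and `μ' = min{1, 1/I_in}`. -/
theorem one_bit_gap_A
    (J : Type*) [Fintype J] (s : J → ℝ) (hs : ∀ j, 0 ≤ s j)
    (s0 : ℝ) (hs0 : 0 ≤ s0)
    (Iout Iin : ℝ) (hIout : 0 < Iout) (hIin : 0 < Iin) :
    Real.logb 2 (1 + (min 1 (1 / Iout) * s0 + ∑ j, s j) /
        (1 + min 1 (1 / Iin) * Iin))
      ≥ Real.logb 2 (1 + (∑ j, s j) + s0 / (1 + Iout)) - 1 := by
  have hsum : 0 ≤ ∑ j, s j := sum_nonneg fun j _ => hs j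
  have hsignal : ∑ j, s j + s0 / (1 + Iout) ≤ min 1 (1 / Iout) * s0 + ∑ j, s j := by
    linarith [div_one_add_le_min_one_one_div_mul hs0 hIout]
  have hnoise : 1 + min 1 (1 / Iin) * Iin ≤ 2 := by
    linarith [min_one_one_div_mul_le_one hIin.le]
  rw [add_assoc, ge_iff_le]
  exact logb_one_add_sub_one_le_logb_one_add_div one_lt_two (by positivity) hsignal
    (by positivity) hnoise
end

section
/- Let J be a finite index set, s_j ≥ 0 (j ∈ J) be reals, and I_in > 0 be a real. Set μ' = min{1, 1/I_in}. Then log₂(1 + (Σ_{j∈J} s_j)/(1 + μ'·I_in)) ≥ log₂(1 + Σ_{j∈J} s_j) − 1. -/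
open Finset

/-!
A noise level `d ≥ 1` in place of `1` costs at most `logb b d`, because
`1 + x / d ≥ (1 + x) / d`. The Etkin–Tse–Wang fraction makes the private interference arrive with
power `min Iin 1`, at most the unit noise power, so here `d ≤ 2` and the cost is at most one bit.
-/

theorem min_one_one_div_mul_self {K : Type*} [Field K] [LinearOrder K] [IsStrictOrderedRing K]
    {a : K} (ha : 0 < a) : min 1 (1 / a) * a = min a 1 := by
  rw [min_mul_of_nonneg _ _ ha.le, one_mul, one_div_mul_cancel ha.ne']

theorem one_add_div_le_one_add_div {K : Type*} [Field K] [LinearOrder K] [IsStrictOrderedRing K]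
    (x : K) {d : K} (hd : 1 ≤ d) : (1 + x) / d ≤ 1 + x / d := by
  rw [add_div]
  gcongr
  exact div_le_one_of_le₀ hd (zero_le_one.trans hd)

theorem logb_one_add_sub_logb_le_logb_one_add_div {b x d : ℝ} (hb : 1 < b) (hx : 0 < 1 + x)
    (hd : 1 ≤ d) : Real.logb b (1 + x) - Real.logb b d ≤ Real.logb b (1 + x / d) := by
  have hd_pos : 0 < d := zero_lt_one.trans_le hd
  rw [← Real.logb_div hx.ne' hd_pos.ne']
  exact Real.logb_le_logb_of_le hb (div_pos hx hd_pos) (one_add_div_le_one_add_div x hd)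

/-- one-bit gap between the inner set function `B` and the outer
set function `B̄` of the Gaussian MAC-IC-MAC, with Etkin–Tse–Wang private-power
fraction `μ' = min{1, 1/I_in}`. -/
theorem one_bit_gap_B
    (J : Type*) [Fintype J] (s : J → ℝ) (hs : ∀ j, 0 ≤ s j)
    (Iin : ℝ) (hIin : 0 < Iin) :
    Real.logb 2 (1 + (∑ j, s j) / (1 + min 1 (1 / Iin) * Iin))
      ≥ Real.logb 2 (1 + ∑ j, s j) - 1 := by
  rw [min_one_one_div_mul_self hIin, ge_iff_le]
  have hsnr : 0 < 1 + ∑ j, s j := add_pos_of_pos_of_nonneg one_pos (sum_nonneg fun j _ ↦ hs j)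
  have hnoise : 1 ≤ 1 + min Iin 1 := le_add_of_nonneg_right (le_min hIin.le zero_le_one)
  have hnoise_two : 1 + min Iin 1 ≤ 2 := by linarith [min_le_right Iin 1]
  have hcost : Real.logb 2 (1 + min Iin 1) ≤ 1 :=
    (Real.logb_le_logb_of_le one_lt_two (one_pos.trans_le hnoise) hnoise_two).trans_eq
      (Real.logb_self_eq_one one_lt_two)
  calc Real.logb 2 (1 + ∑ j, s j) - 1
      ≤ Real.logb 2 (1 + ∑ j, s j) - Real.logb 2 (1 + min Iin 1) := sub_le_sub_left hcost _
    _ ≤ Real.logb 2 (1 + (∑ j, s j) / (1 + min Iin 1)) :=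
      logb_one_add_sub_logb_le_logb_one_add_div one_lt_two hsnr hnoise
end

section
/- Fix integers K_a, K_b ≥ 1, nonnegative reals SNR_{ij} for i ∈ {a,b} and j ∈ {0,…,K_i−1}, and positive reals INR_a, INR_b. If a componentwise nonnegative rate tuple (R_a, R_b) ∈ ℝ^{K_a} × ℝ^{K_b} satisfies the seven generic inequality families for the outer Gaussian set functions (Ā_i, B̄_i, Ē_i, Ḡ_i), then the tuple obtained by subtracting 1 from every coordinate of R_a and of R_b satisfies the seven generic inequality families for the inner Gaussian set functions (A_i, B_i, E_i, G_i). In other words, the inner and outer bounds for the Gaussian MAC-IC-MAC differ by at most one bit per user. -/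
open Finset

/-- `C(x) = log₂(1+x)`. -/
noncomputable def gaussC (x : ℝ) : ℝ := Real.logb 2 (1 + x)

/-- The seven generic inequality families of the MAC-IC-MAC region. -/
def GenericRegion {na nb : ℕ} [NeZero na] [NeZero nb]
    (Ra : Fin na → ℝ) (Rb : Fin nb → ℝ)
    (Aa Ba Ea Ga : Finset (Fin na) → ℝ)
    (Ab Bb Eb Gb : Finset (Fin nb) → ℝ) : Prop :=
  ∀ (Υa Ωa : Finset (Fin na)) (Υb Ωb : Finset (Fin nb)),
    0 ∈ Υa → Ωa.Nonempty → 0 ∈ Υb → Ωb.Nonempty →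
      (∑ j ∈ Ωa, Ra j) ≤ Ba Ωa ∧
      (∑ j ∈ Ωb, Rb j) ≤ Bb Ωb ∧
      (∑ j ∈ Υa, Ra j) + (∑ j ∈ Ωb, Rb j) ≤ Aa Υa + Gb Ωb ∧
      (∑ j ∈ Ωa, Ra j) + (∑ j ∈ Υb, Rb j) ≤ Ab Υb + Ga Ωa ∧
      (∑ j ∈ Υa, Ra j) + (∑ j ∈ Υb, Rb j) ≤ Ea Υa + Eb Υb ∧
      (∑ j ∈ Υa, Ra j) + (∑ j ∈ Ωa, Ra j) + (∑ j ∈ Υb, Rb j)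
        ≤ Aa Υa + Ga Ωa + Eb Υb ∧
      (∑ j ∈ Υa, Ra j) + (∑ j ∈ Ωb, Rb j) + (∑ j ∈ Υb, Rb j)
        ≤ Ab Υb + Gb Ωb + Ea Υa

/-- Inner Gaussian set function `A` of a cell with direct SNRs `SNR`,
outgoing INR `Iout` and incoming INR `Iin`. -/
noncomputable def innerA {n : ℕ} [NeZero n] (SNR : Fin n → ℝ) (Iout Iin : ℝ)
    (Υ : Finset (Fin n)) : ℝ :=
  gaussC ((min 1 (1 / Iout) * SNR 0 + ∑ j ∈ Υ.erase 0, SNR j) /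
    (1 + min 1 (1 / Iin) * Iin))

/-- Inner Gaussian set function `B`. -/
noncomputable def innerB {n : ℕ} (SNR : Fin n → ℝ) (Iin : ℝ)
    (Ω : Finset (Fin n)) : ℝ :=
  gaussC ((∑ j ∈ Ω, SNR j) / (1 + min 1 (1 / Iin) * Iin))

/-- Inner Gaussian set function `E`. -/
noncomputable def innerE {n : ℕ} [NeZero n] (SNR : Fin n → ℝ) (Iout Iin : ℝ)
    (Υ : Finset (Fin n)) : ℝ :=
  gaussC ((min 1 (1 / Iout) * SNR 0 + (∑ j ∈ Υ.erase 0, SNR j) +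
    (1 - min 1 (1 / Iin)) * Iin) / (1 + min 1 (1 / Iin) * Iin))

/-- Inner Gaussian set function `G`. -/
noncomputable def innerG {n : ℕ} (SNR : Fin n → ℝ) (Iin : ℝ)
    (Ω : Finset (Fin n)) : ℝ :=
  gaussC (((∑ j ∈ Ω, SNR j) + Iin) / (1 + min 1 (1 / Iin) * Iin))

/-- Outer Gaussian set function `Ā`. -/
noncomputable def outerA {n : ℕ} [NeZero n] (SNR : Fin n → ℝ) (Iout : ℝ)
    (Υ : Finset (Fin n)) : ℝ :=
  gaussC ((∑ j ∈ Υ.erase 0, SNR j) + SNR 0 / (1 + Iout))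

/-- Outer Gaussian set function `B̄`. -/
noncomputable def outerB {n : ℕ} (SNR : Fin n → ℝ) (Ω : Finset (Fin n)) : ℝ :=
  gaussC (∑ j ∈ Ω, SNR j)

/-- Outer Gaussian set function `Ē`. -/
noncomputable def outerE {n : ℕ} [NeZero n] (SNR : Fin n → ℝ) (Iout Iin : ℝ)
    (Υ : Finset (Fin n)) : ℝ :=
  gaussC ((∑ j ∈ Υ.erase 0, SNR j) + SNR 0 / (1 + Iout) + Iin)

/-- Outer Gaussian set function `Ḡ`. -/
noncomputable def outerG {n : ℕ} (SNR : Fin n → ℝ) (Iin : ℝ)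
    (Ω : Finset (Fin n)) : ℝ :=
  gaussC ((∑ j ∈ Ω, SNR j) + Iin)

/-!
Write `m = μ * INR = min INR 1` for the power at which the other cell's private signal is received.
Treating it as noise costs exactly `C(m)` bits, because
`C(y / (1 + m)) = C(y + m) - C(m)`, and `y + m` is at least the received power of the outer bound
since `μ ≥ 1 / (1 + INR)`. So every set function of a cell loses at most `C(m) ≤ 1` when passing
from the outer to the inner bound. In each of the seven families, each cell contributes as many rate
sums on the left as set functions on the right. Rate sums run over nonempty sets of users, so
lowering each rate of the cell by `C(m)` pays for the loss.
-/

section GaussC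

variable {x y m : ℝ}

lemma gaussC_le_gaussC (hx : -1 < x) (hxy : x ≤ y) : gaussC x ≤ gaussC y :=
  Real.logb_le_logb_of_le one_lt_two (by linarith) (by linarith)

lemma gaussC_nonneg (hx : 0 ≤ x) : 0 ≤ gaussC x :=
  Real.logb_nonneg one_lt_two (by linarith)

lemma gaussC_one : gaussC 1 = 1 := by
  rw [gaussC, one_add_one_eq_two, Real.logb_self_eq_one one_lt_two]

lemma gaussC_min_one_le_one (hx : -1 < x) : gaussC (min x 1) ≤ 1 :=
  (gaussC_le_gaussC (lt_min hx (by norm_num)) (min_le_right x 1)).trans_eq gaussC_one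

lemma gaussC_div_one_add (hm : 1 + m ≠ 0) (hym : 1 + (y + m) ≠ 0) :
    gaussC (y / (1 + m)) = gaussC (y + m) - gaussC m := by
  have split_noise : 1 + y / (1 + m) = (1 + (y + m)) / (1 + m) := by
    field_simp
    ring
  rw [gaussC, split_noise, Real.logb_div hym hm, gaussC, gaussC]

lemma gaussC_sub_le_gaussC_div (hx : -1 < x) (hm : -1 < m) (h : x ≤ y + m) :
    gaussC x - gaussC m ≤ gaussC (y / (1 + m)) := by
  rw [gaussC_div_one_add (by linarith) (by linarith)]
  exact sub_le_sub_right (gaussC_le_gaussC hx h) _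

end GaussC

section PowerSplit

variable {I : ℝ}

lemma min_one_one_div_mul_self_s6 (hI : 0 ≤ I) : min 1 (1 / I) * I = min I 1 := by
  obtain rfl | hI := hI.eq_or_lt
  · simp
  · rw [min_mul_of_nonneg _ _ hI.le, one_mul, one_div_mul_cancel hI.ne']

lemma one_div_one_add_le_min (hI : 0 < I) : 1 / (1 + I) ≤ min 1 (1 / I) :=
  le_min (div_le_one_of_le₀ (by linarith) (by linarith))
    (one_div_le_one_div_of_le hI (by linarith))

lemma div_one_add_le_min_mul {s : ℝ} (hI : 0 < I) (hs : 0 ≤ s) :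
    s / (1 + I) ≤ min 1 (1 / I) * s := by
  rw [div_eq_mul_one_div, mul_comm]
  exact mul_le_mul_of_nonneg_right (one_div_one_add_le_min hI) hs

end PowerSplit

section SetFunctions

variable {n : ℕ} {SNR : Fin n → ℝ} {Iout Iin : ℝ}

lemma outerA_sub_le_innerA [NeZero n] (hSNR : ∀ j, 0 ≤ SNR j) (hIout : 0 < Iout) (hIin : 0 ≤ Iin)
    (Υ : Finset (Fin n)) :
    outerA SNR Iout Υ - gaussC (min Iin 1) ≤ innerA SNR Iout Iin Υ := by
  have hsum : 0 ≤ ∑ j ∈ Υ.erase 0, SNR j := sum_nonneg fun j _ => hSNR j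
  have hzero : 0 ≤ SNR 0 / (1 + Iout) := div_nonneg (hSNR 0) (by linarith)
  have hmin : 0 ≤ min Iin 1 := le_min hIin zero_le_one
  rw [outerA, innerA, min_one_one_div_mul_self_s6 hIin]
  refine gaussC_sub_le_gaussC_div (by linarith) (by linarith) ?_
  linarith [div_one_add_le_min_mul hIout (hSNR 0)]

lemma outerB_sub_le_innerB (hSNR : ∀ j, 0 ≤ SNR j) (hIin : 0 ≤ Iin) (Ω : Finset (Fin n)) :
    outerB SNR Ω - gaussC (min Iin 1) ≤ innerB SNR Iin Ω := by
  have hsum : 0 ≤ ∑ j ∈ Ω, SNR j := sum_nonneg fun j _ => hSNR j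
  have hmin : 0 ≤ min Iin 1 := le_min hIin zero_le_one
  rw [outerB, innerB, min_one_one_div_mul_self_s6 hIin]
  exact gaussC_sub_le_gaussC_div (by linarith) (by linarith) (by linarith)

lemma outerE_sub_le_innerE [NeZero n] (hSNR : ∀ j, 0 ≤ SNR j) (hIout : 0 < Iout) (hIin : 0 ≤ Iin)
    (Υ : Finset (Fin n)) :
    outerE SNR Iout Iin Υ - gaussC (min Iin 1) ≤ innerE SNR Iout Iin Υ := by
  have hsum : 0 ≤ ∑ j ∈ Υ.erase 0, SNR j := sum_nonneg fun j _ => hSNR j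
  have hzero : 0 ≤ SNR 0 / (1 + Iout) := div_nonneg (hSNR 0) (by linarith)
  have hmin : 0 ≤ min Iin 1 := le_min hIin zero_le_one
  rw [outerE, innerE, sub_mul, one_mul, min_one_one_div_mul_self_s6 hIin]
  refine gaussC_sub_le_gaussC_div (by linarith) (by linarith) ?_
  linarith [div_one_add_le_min_mul hIout (hSNR 0)]

lemma outerG_sub_le_innerG (hSNR : ∀ j, 0 ≤ SNR j) (hIin : 0 ≤ Iin) (Ω : Finset (Fin n)) :
    outerG SNR Iin Ω - gaussC (min Iin 1) ≤ innerG SNR Iin Ω := by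
  have hsum : 0 ≤ ∑ j ∈ Ω, SNR j := sum_nonneg fun j _ => hSNR j
  have hmin : 0 ≤ min Iin 1 := le_min hIin zero_le_one
  rw [outerG, innerG, min_one_one_div_mul_self_s6 hIin]
  exact gaussC_sub_le_gaussC_div (by linarith) (by linarith) (by linarith)

end SetFunctions

lemma sum_sub_const_le {ι M : Type*} [AddCommGroup M] [PartialOrder M] [IsOrderedAddMonoid M]
    {s : Finset ι} (hs : s.Nonempty) (f : ι → M) {c : M} (hc : 0 ≤ c) :
    ∑ j ∈ s, (f j - c) ≤ (∑ j ∈ s, f j) - c := by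
  rw [sum_sub_distrib, sum_const]
  exact sub_le_sub_left (le_self_nsmul hc hs.card_ne_zero) _

namespace GenericRegion

variable {na nb : ℕ} [NeZero na] [NeZero nb] {Ra Ra' : Fin na → ℝ} {Rb Rb' : Fin nb → ℝ}
  {Aa Ba Ea Ga Aa' Ba' Ea' Ga' : Finset (Fin na) → ℝ}
  {Ab Bb Eb Gb Ab' Bb' Eb' Gb' : Finset (Fin nb) → ℝ}

lemma anti_rates (h : GenericRegion Ra Rb Aa Ba Ea Ga Ab Bb Eb Gb)
    (ha : Ra' ≤ Ra) (hb : Rb' ≤ Rb) : GenericRegion Ra' Rb' Aa Ba Ea Ga Ab Bb Eb Gb := by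
  intro Υa Ωa Υb Ωb hΥa hΩa hΥb hΩb
  obtain ⟨le_Ba, le_Bb, le_AaGb, le_AbGa, le_EaEb, le_AaGaEb, le_AbGbEa⟩ :=
    h Υa Ωa Υb Ωb hΥa hΩa hΥb hΩb
  have sum_a_le (S : Finset (Fin na)) : ∑ j ∈ S, Ra' j ≤ ∑ j ∈ S, Ra j :=
    sum_le_sum fun j _ => ha j
  have sum_b_le (S : Finset (Fin nb)) : ∑ j ∈ S, Rb' j ≤ ∑ j ∈ S, Rb j :=
    sum_le_sum fun j _ => hb j
  refine ⟨?_, ?_, ?_, ?_, ?_, ?_, ?_⟩ <;>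
    linarith [sum_a_le Υa, sum_a_le Ωa, sum_b_le Υb, sum_b_le Ωb]

lemma sub_const {δa δb : ℝ} (h : GenericRegion Ra Rb Aa Ba Ea Ga Ab Bb Eb Gb)
    (hδa : 0 ≤ δa) (hδb : 0 ≤ δb)
    (hAa : ∀ Υ, Aa Υ - δa ≤ Aa' Υ) (hBa : ∀ Ω, Ba Ω - δa ≤ Ba' Ω)
    (hEa : ∀ Υ, Ea Υ - δa ≤ Ea' Υ) (hGa : ∀ Ω, Ga Ω - δa ≤ Ga' Ω)
    (hAb : ∀ Υ, Ab Υ - δb ≤ Ab' Υ) (hBb : ∀ Ω, Bb Ω - δb ≤ Bb' Ω)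
    (hEb : ∀ Υ, Eb Υ - δb ≤ Eb' Υ) (hGb : ∀ Ω, Gb Ω - δb ≤ Gb' Ω) :
    GenericRegion (fun j => Ra j - δa) (fun j => Rb j - δb)
      Aa' Ba' Ea' Ga' Ab' Bb' Eb' Gb' := by
  intro Υa Ωa Υb Ωb hΥa hΩa hΥb hΩb
  obtain ⟨le_Ba, le_Bb, le_AaGb, le_AbGa, le_EaEb, le_AaGaEb, le_AbGbEa⟩ :=
    h Υa Ωa Υb Ωb hΥa hΩa hΥb hΩb
  have sum_Υa := sum_sub_const_le ⟨0, hΥa⟩ Ra hδa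
  have sum_Ωa := sum_sub_const_le hΩa Ra hδa
  have sum_Υb := sum_sub_const_le ⟨0, hΥb⟩ Rb hδb
  have sum_Ωb := sum_sub_const_le hΩb Rb hδb
  exact ⟨
    by linarith [hBa Ωa],
    by linarith [hBb Ωb],
    by linarith [hAa Υa, hGb Ωb],
    by linarith [hAb Υb, hGa Ωa],
    by linarith [hEa Υa, hEb Υb],
    by linarith [hAa Υa, hGa Ωa, hEb Υb],
    by linarith [hAb Υb, hGb Ωb, hEa Υa]⟩

end GenericRegion

theorem gaussian_mac_ic_mac_one_bit_gap_general {na nb : ℕ} [NeZero na] [NeZero nb]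
    {SNRa : Fin na → ℝ} {SNRb : Fin nb → ℝ}
    (hSNRa : ∀ j, 0 ≤ SNRa j) (hSNRb : ∀ j, 0 ≤ SNRb j)
    {INRa INRb : ℝ} (hINRa : 0 < INRa) (hINRb : 0 < INRb)
    {Ra : Fin na → ℝ} {Rb : Fin nb → ℝ}
    (hout : GenericRegion Ra Rb
      (outerA SNRa INRa) (outerB SNRa) (outerE SNRa INRa INRb) (outerG SNRa INRb)
      (outerA SNRb INRb) (outerB SNRb) (outerE SNRb INRb INRa) (outerG SNRb INRa)) :
    GenericRegion
      (fun j => Ra j - gaussC (min INRb 1)) (fun j => Rb j - gaussC (min INRa 1))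
      (innerA SNRa INRa INRb) (innerB SNRa INRb) (innerE SNRa INRa INRb) (innerG SNRa INRb)
      (innerA SNRb INRb INRa) (innerB SNRb INRa) (innerE SNRb INRb INRa) (innerG SNRb INRa) :=
  hout.sub_const
    (gaussC_nonneg (le_min hINRb.le zero_le_one)) (gaussC_nonneg (le_min hINRa.le zero_le_one))
    (outerA_sub_le_innerA hSNRa hINRa hINRb.le) (outerB_sub_le_innerB hSNRa hINRb.le)
    (outerE_sub_le_innerE hSNRa hINRa hINRb.le) (outerG_sub_le_innerG hSNRa hINRb.le)
    (outerA_sub_le_innerA hSNRb hINRb hINRa.le) (outerB_sub_le_innerB hSNRb hINRa.le)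
    (outerE_sub_le_innerE hSNRb hINRb hINRa.le) (outerG_sub_le_innerG hSNRb hINRa.le)

/-- the inner and outer bounds of the Gaussian MAC-IC-MAC differ
by at most one bit per user: any componentwise nonnegative rate tuple in the
outer region, reduced by one bit in every coordinate, lies in the inner
region.  `INRa` (resp. `INRb`) is the INR caused by transmitter `a0`
(resp. `b0`) at the other cell's receiver. -/
theorem gaussian_mac_ic_mac_one_bit_gap
    (Ka Kb : ℕ)
    (SNRa : Fin (Ka + 1) → ℝ) (SNRb : Fin (Kb + 1) → ℝ)
    (hSNRa : ∀ j, 0 ≤ SNRa j) (hSNRb : ∀ j, 0 ≤ SNRb j)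
    (INRa INRb : ℝ) (hINRa : 0 < INRa) (hINRb : 0 < INRb)
    (Ra : Fin (Ka + 1) → ℝ) (Rb : Fin (Kb + 1) → ℝ)
    (hRa : ∀ j, 0 ≤ Ra j) (hRb : ∀ j, 0 ≤ Rb j)
    (hout : GenericRegion Ra Rb
      (outerA SNRa INRa) (outerB SNRa) (outerE SNRa INRa INRb)
      (outerG SNRa INRb)
      (outerA SNRb INRb) (outerB SNRb) (outerE SNRb INRb INRa)
      (outerG SNRb INRa)) :
    GenericRegion (fun j => Ra j - 1) (fun j => Rb j - 1)
      (innerA SNRa INRa INRb) (innerB SNRa INRb) (innerE SNRa INRa INRb)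
      (innerG SNRa INRb)
      (innerA SNRb INRb INRa) (innerB SNRb INRa) (innerE SNRb INRb INRa)
      (innerG SNRb INRa) := by
  exact (gaussian_mac_ic_mac_one_bit_gap_general hSNRa hSNRb hINRa hINRb hout).anti_rates
    (fun j => sub_le_sub_left (gaussC_min_one_le_one (by linarith)) (Ra j))
    (fun j => sub_le_sub_left (gaussC_min_one_le_one (by linarith)) (Rb j))
end

section
/- Let J be a finite (possibly empty) index set, α_j ≥ 0 (j ∈ J), and α₀ ≥ 0, β ≥ 0, γ ≥ 0 be reals. Then the function ρ ↦ log₂(1 + (min{1, ρ^{−β}}·ρ^{α₀} + Σ_{j∈J} ρ^{α_j} + (1 − min{1, ρ^{−γ}})·ρ^{γ}) / (1 + min{1, ρ^{−γ}}·ρ^{γ})) / log₂(ρ) tends, as ρ → ∞, to the maximum of the following quantities: (α₀ − β)⁺, max_{j∈J} α_j (interpreted as 0 if J is empty), and γ, where (x)⁺ = max{x, 0}. -/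
open Finset Filter

/-- Maximum of a finite family of reals, interpreted as `0` when the index
set is empty (folding `max` with base point `0`). -/
def finMax0 {J : Type*} [Fintype J] (α : J → ℝ) : ℝ :=
  (Finset.univ : Finset J).fold max 0 α

/-!
Writing the argument of the logarithm over its own denominator makes the terms in `μ'` cancel, and
it becomes `(μ ρ^α₀ + (1 + ∑ j, ρ^(α j)) + ρ^γ) / (1 + μ' ρ^γ)`. Growth exponents turn products into
sums, quotients into differences, and sums of positive functions into maxima (no cancellation can
occur), so the exponent can be read off; the denominator has exponent `0`.
-/

open scoped Topology

/-- `f` behaves like `ρ ^ a` on the logarithmic scale as `ρ → ∞`: the generalized degrees of freedom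
carried by the power level `f` are `a`. Eventual positivity is part of the notion, which keeps `log`
away from its junk values. The quotient `log (f ρ) / log ρ` is encoded as `logb ρ (f ρ)`. -/
structure HasGrowthExponent (f : ℝ → ℝ) (a : ℝ) : Prop where
  eventually_pos : ∀ᶠ ρ in atTop, 0 < f ρ
  tendsto_logb : Tendsto (fun ρ => Real.logb ρ (f ρ)) atTop (𝓝 a)

namespace HasGrowthExponent

variable {f g : ℝ → ℝ} {a b : ℝ}

protected lemma congr (hf : HasGrowthExponent f a) (h : f =ᶠ[atTop] g) : HasGrowthExponent g a where
  eventually_pos := by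
    filter_upwards [hf.eventually_pos, h] with ρ hpos hfg using hfg ▸ hpos
  tendsto_logb := hf.tendsto_logb.congr' <| by
    filter_upwards [h] with ρ hfg using by rw [hfg]

lemma tendsto_logb_div_logb (hf : HasGrowthExponent f a) {c : ℝ} (hc₀ : 0 < c) (hc₁ : c ≠ 1) :
    Tendsto (fun ρ => Real.logb c (f ρ) / Real.logb c ρ) atTop (𝓝 a) := by
  have log_ne_zero := Real.log_ne_zero_of_pos_of_ne_one hc₀ hc₁
  simpa only [Real.logb, div_div_div_cancel_right₀ log_ne_zero] using hf.tendsto_logb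

lemma const {c : ℝ} (hc : 0 < c) : HasGrowthExponent (fun _ => c) 0 where
  eventually_pos := .of_forall fun _ => hc
  tendsto_logb := Real.tendsto_log_atTop.const_div_atTop (Real.log c)

lemma rpow (a : ℝ) : HasGrowthExponent (fun ρ => ρ ^ a) a where
  eventually_pos := by
    filter_upwards [eventually_gt_atTop 0] with ρ hρ using Real.rpow_pos_of_pos hρ a
  tendsto_logb := tendsto_const_nhds.congr' <| by
    filter_upwards [eventually_gt_atTop 1] with ρ hρ
    exact (Real.logb_rpow (by linarith) hρ.ne').symm

lemma mul (hf : HasGrowthExponent f a) (hg : HasGrowthExponent g b) :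
    HasGrowthExponent (fun ρ => f ρ * g ρ) (a + b) where
  eventually_pos := by
    filter_upwards [hf.eventually_pos, hg.eventually_pos] with ρ hfρ hgρ using mul_pos hfρ hgρ
  tendsto_logb := (hf.tendsto_logb.add hg.tendsto_logb).congr' <| by
    filter_upwards [hf.eventually_pos, hg.eventually_pos] with ρ hfρ hgρ
    exact (Real.logb_mul hfρ.ne' hgρ.ne').symm

lemma div (hf : HasGrowthExponent f a) (hg : HasGrowthExponent g b) :
    HasGrowthExponent (fun ρ => f ρ / g ρ) (a - b) where
  eventually_pos := by
    filter_upwards [hf.eventually_pos, hg.eventually_pos] with ρ hfρ hgρ using div_pos hfρ hgρ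
  tendsto_logb := (hf.tendsto_logb.sub hg.tendsto_logb).congr' <| by
    filter_upwards [hf.eventually_pos, hg.eventually_pos] with ρ hfρ hgρ
    exact (Real.logb_div hfρ.ne' hgρ.ne').symm

protected lemma min (hf : HasGrowthExponent f a) (hg : HasGrowthExponent g b) :
    HasGrowthExponent (fun ρ => min (f ρ) (g ρ)) (min a b) where
  eventually_pos := by
    filter_upwards [hf.eventually_pos, hg.eventually_pos] with ρ hfρ hgρ using lt_min hfρ hgρ
  tendsto_logb := (hf.tendsto_logb.min hg.tendsto_logb).congr' <| by
    filter_upwards [hf.eventually_pos, hg.eventually_pos, eventually_gt_atTop 1] with ρ hfρ hgρ hρ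
    exact ((Real.strictMonoOn_logb hρ).monotoneOn.map_min hfρ hgρ).symm

protected lemma max (hf : HasGrowthExponent f a) (hg : HasGrowthExponent g b) :
    HasGrowthExponent (fun ρ => max (f ρ) (g ρ)) (max a b) where
  eventually_pos := by
    filter_upwards [hf.eventually_pos] with ρ hfρ using lt_max_of_lt_left hfρ
  tendsto_logb := (hf.tendsto_logb.max hg.tendsto_logb).congr' <| by
    filter_upwards [hf.eventually_pos, hg.eventually_pos, eventually_gt_atTop 1] with ρ hfρ hgρ hρ
    exact ((Real.strictMonoOn_logb hρ).monotoneOn.map_max hfρ hgρ).symm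

lemma of_le_of_le {l u : ℝ → ℝ} (hl : HasGrowthExponent l a) (hu : HasGrowthExponent u a)
    (hlf : l ≤ᶠ[atTop] f) (hfu : f ≤ᶠ[atTop] u) : HasGrowthExponent f a where
  eventually_pos := by
    filter_upwards [hl.eventually_pos, hlf] with ρ hlρ hlf using hlρ.trans_le hlf
  tendsto_logb := by
    refine tendsto_of_tendsto_of_tendsto_of_le_of_le' hl.tendsto_logb hu.tendsto_logb ?_ ?_
    · filter_upwards [hl.eventually_pos, hlf, eventually_gt_atTop 1] with ρ hlρ hlf hρ
      exact Real.logb_le_logb_of_le hρ hlρ hlf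
    · filter_upwards [hl.eventually_pos, hlf, hfu, eventually_gt_atTop 1] with ρ hlρ hlf hfu hρ
      exact Real.logb_le_logb_of_le hρ (hlρ.trans_le hlf) hfu

lemma add (hf : HasGrowthExponent f a) (hg : HasGrowthExponent g b) :
    HasGrowthExponent (fun ρ => f ρ + g ρ) (max a b) := by
  have two_mul_max := (const two_pos).mul (hf.max hg)
  rw [zero_add] at two_mul_max
  refine (hf.max hg).of_le_of_le two_mul_max ?_ ?_
  · filter_upwards [hf.eventually_pos, hg.eventually_pos] with ρ hfρ hgρ
    exact max_le_add_of_nonneg hfρ.le hgρ.le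
  · filter_upwards with ρ
    linarith [le_max_left (f ρ) (g ρ), le_max_right (f ρ) (g ρ)]

lemma add_sum {ι : Type*} {F : ι → ℝ → ℝ} {α : ι → ℝ} (s : Finset ι)
    (hg : HasGrowthExponent g b) (hF : ∀ i ∈ s, HasGrowthExponent (F i) (α i)) :
    HasGrowthExponent (fun ρ => g ρ + ∑ i ∈ s, F i ρ) (s.fold max b α) := by
  classical
  induction s using Finset.induction_on with
  | empty => simpa using hg
  | insert i s hi ih =>
    rw [Finset.forall_mem_insert] at hF
    simpa only [Finset.sum_insert hi, Finset.fold_insert hi, add_left_comm] using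
      hF.1.add (ih hF.2)

end HasGrowthExponent

lemma finMax0_nonneg {J : Type*} [Fintype J] (α : J → ℝ) : 0 ≤ finMax0 α :=
  (Finset.le_fold_max 0).2 (.inl le_rfl)

lemma one_add_div_one_add_mul {K : Type*} [Field K] {μ x : K} (h : 1 + μ * x ≠ 0) (s t : K) :
    1 + (s + t + (1 - μ) * x) / (1 + μ * x) = (s + (1 + t) + x) / (1 + μ * x) := by
  field_simp
  ring

lemma hasGrowthExponent_min_one_rpow_neg_mul_rpow (a b : ℝ) :
    HasGrowthExponent (fun ρ => min 1 (ρ ^ (-b)) * ρ ^ a) (a - max b 0) := by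
  have exponent_eq : min 0 (-b) + a = a - max b 0 := by
    rw [← neg_zero, min_neg_neg, neg_zero, max_comm, neg_add_eq_sub]
  exact exponent_eq ▸ ((HasGrowthExponent.const one_pos).min (.rpow (-b))).mul (.rpow a)

theorem gdof_limit_inner_E_general
    (J : Type*) [Fintype J] (α : J → ℝ) (α₀ β γ : ℝ) :
    Tendsto
      (fun ρ : ℝ => Real.logb 2
          (1 + (min 1 (ρ ^ (-β)) * ρ ^ α₀ + (∑ j, ρ ^ (α j)) +
              (1 - min 1 (ρ ^ (-γ))) * ρ ^ γ) /
            (1 + min 1 (ρ ^ (-γ)) * ρ ^ γ)) /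
        Real.logb 2 ρ)
      atTop
      (𝓝 (max (max (max (α₀ - max β 0) 0) (finMax0 α)) γ)) := by
  have signal : HasGrowthExponent (fun ρ => 1 + ∑ j, ρ ^ α j) (finMax0 α) :=
    (HasGrowthExponent.const one_pos).add_sum univ fun j _ => .rpow (α j)
  have numerator :=
    ((hasGrowthExponent_min_one_rpow_neg_mul_rpow α₀ β).add signal).add (.rpow γ)
  have denominator : HasGrowthExponent (fun ρ => 1 + min 1 (ρ ^ (-γ)) * ρ ^ γ) 0 := by
    have exponent_eq : max 0 (γ - max γ 0) = 0 := max_eq_left (by simp)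
    exact exponent_eq ▸
      (HasGrowthExponent.const one_pos).add (hasGrowthExponent_min_one_rpow_neg_mul_rpow γ γ)
  have quotient := numerator.div denominator
  rw [sub_zero, ← max_eq_right (finMax0_nonneg α), ← max_assoc] at quotient
  refine (quotient.congr ?_).tendsto_logb_div_logb two_pos (OfNat.ofNat_ne_one 2)
  filter_upwards [denominator.eventually_pos] with ρ hρ
  exact (one_add_div_one_add_mul hρ.ne' _ _).symm

/-- the GDoF exponent of the Etkin–Tse–Wang inner set function
`E`: with `SNR₀ = ρ^{α₀}`, `SNR_j = ρ^{α_j}`, outgoing INR `ρ^β`, incoming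
INR `ρ^γ`, `μ = min{1, ρ^{−β}}`, `μ' = min{1, ρ^{−γ}}`,
`log₂(1 + (μ·ρ^{α₀} + Σ_j ρ^{α_j} + (1−μ')·ρ^γ)/(1 + μ'·ρ^γ)) / log₂ ρ`
tends to `max{(α₀−β)⁺, max_j α_j (0 if J empty), γ}` as `ρ → ∞`. -/
theorem gdof_limit_inner_E
    (J : Type*) [Fintype J]
    (α : J → ℝ) (hα : ∀ j, 0 ≤ α j)
    (α₀ β γ : ℝ) (hα₀ : 0 ≤ α₀) (hβ : 0 ≤ β) (hγ : 0 ≤ γ) :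
    Tendsto
      (fun ρ : ℝ => Real.logb 2
          (1 + (min 1 (ρ ^ (-β)) * ρ ^ α₀ + (∑ j, ρ ^ (α j)) +
              (1 - min 1 (ρ ^ (-γ))) * ρ ^ γ) /
            (1 + min 1 (ρ ^ (-γ)) * ρ ^ γ)) /
        Real.logb 2 ρ)
      atTop
      (nhds (max (max (max (α₀ - β) 0) (finMax0 α)) γ)) := by
  simpa only [max_eq_left hβ] using gdof_limit_inner_E_general J α α₀ β γ
end

section
/- Fix an integer K ≥ 2 and a real α ≥ 0, and let both cells have K users with the symmetric GDoF set functions a(Υ) = (1−α)⁺ if Υ = {0} and a(Υ) = 1 otherwise, b(Ω) = 1, e(Υ) = max{a(Υ), α}, g(Ω) = max{1, α}. Then the supremum of all d ≥ 0 such that the all-equal rate tuple (d, …, d) ∈ ℝ^{2K} satisfies the seven generic inequality families equals: 1/K if 0 ≤ α ≤ 1 − 1/K; (2 − α)/(K + 1) if 1 − 1/K ≤ α ≤ 1; α/(K + 1) if 1 ≤ α ≤ 1 + 1/K; and 1/K if α ≥ 1 + 1/K. Equivalently, this supremum equals min{1/K, max{2 − α, α}/(K + 1)}. -/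
/-!
When both cells have the same rates and set functions, the seven families are equivalent to the
three bounds `R_Ω ≤ B Ω`, `R_Υ ≤ E Υ` and `R_Υ + R_Ω ≤ A Υ + G Ω`. At the tuple `(d, …, d)` with
`d ≥ 0` each of these has one critical instance: `Ω` the full cell, `Υ = {0}`, and the pair of both.
These give `K d ≤ 1`, `d ≤ max (1 - α) α` and `(K + 1) d ≤ max (2 - α) α`, whence a W-shaped curve
for `K = 1`. As `max (1 - α) α ≥ 1 / 2`, the second bound follows from the first for `K ≥ 2`, and
the W becomes a V.
-/

open Finset

/-- Symmetric GDoF set function `a(Υ)`: `(1−α)⁺` if `Υ = {0}`, else `1`. -/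
noncomputable def symA {K : ℕ} [NeZero K] (α : ℝ) (Υ : Finset (Fin K)) : ℝ :=
  if Υ = {0} then max (1 - α) 0 else 1

/-- Symmetric GDoF set function `b(Ω) = 1`. -/
noncomputable def symB {K : ℕ} (_Ω : Finset (Fin K)) : ℝ := 1

/-- Symmetric GDoF set function `e(Υ) = max{a(Υ), α}`. -/
noncomputable def symE {K : ℕ} [NeZero K] (α : ℝ) (Υ : Finset (Fin K)) : ℝ :=
  max (symA α Υ) α

/-- Symmetric GDoF set function `g(Ω) = max{1, α}`. -/
noncomputable def symG {K : ℕ} (α : ℝ) (_Ω : Finset (Fin K)) : ℝ := max 1 α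

theorem genericRegion_self_iff {n : ℕ} [NeZero n] {R : Fin n → ℝ}
    {A B E G : Finset (Fin n) → ℝ} :
    GenericRegion R R A B E G A B E G ↔
      (∀ Ω : Finset (Fin n), Ω.Nonempty → ∑ j ∈ Ω, R j ≤ B Ω) ∧
      (∀ Υ : Finset (Fin n), 0 ∈ Υ → ∑ j ∈ Υ, R j ≤ E Υ) ∧
      ∀ Υ Ω : Finset (Fin n), 0 ∈ Υ → Ω.Nonempty →
        ∑ j ∈ Υ, R j + ∑ j ∈ Ω, R j ≤ A Υ + G Ω := by
  constructor
  · intro h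
    refine ⟨fun Ω hΩ ↦ ?_, fun Υ hΥ ↦ ?_, fun Υ Ω hΥ hΩ ↦ ?_⟩
    · exact (h {0} Ω {0} Ω (mem_singleton_self 0) hΩ (mem_singleton_self 0) hΩ).1
    · obtain ⟨-, -, -, -, hEE, -⟩ := h Υ Υ Υ Υ hΥ ⟨0, hΥ⟩ hΥ ⟨0, hΥ⟩
      linarith
    · exact (h Υ Ω Υ Ω hΥ hΩ hΥ hΩ).2.2.1
  · rintro ⟨hB, hE, hAG⟩ Υa Ωa Υb Ωb hΥa hΩa hΥb hΩb
    refine ⟨hB Ωa hΩa, hB Ωb hΩb, hAG Υa Ωb hΥa hΩb, ?_, add_le_add (hE Υa hΥa) (hE Υb hΥb),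
      add_le_add (hAG Υa Ωa hΥa hΩa) (hE Υb hΥb), ?_⟩
    · linarith [hAG Υb Ωa hΥb hΩa]
    · linarith [hAG Υb Ωb hΥb hΩb, hE Υa hΥa]

theorem one_div_natCast_le_max_one_sub_self {K : ℕ} (hK : 2 ≤ K) (α : ℝ) :
    1 / (K : ℝ) ≤ max (1 - α) α :=
  calc 1 / (K : ℝ) ≤ 1 / 2 := one_div_le_one_div_of_le two_pos (by exact_mod_cast hK)
    _ ≤ max (1 - α) α := by grind

section SymmetricSetFunctions

variable {K : ℕ} [NeZero K]

theorem symA_singleton_zero (α : ℝ) : symA α ({0} : Finset (Fin K)) = max (1 - α) 0 :=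
  if_pos rfl

theorem symA_of_ne_singleton_zero (α : ℝ) {Υ : Finset (Fin K)} (hΥ : Υ ≠ {0}) : symA α Υ = 1 :=
  if_neg hΥ

theorem symE_singleton_zero (α : ℝ) : symE α ({0} : Finset (Fin K)) = max (1 - α) α := by
  rw [symE, symA_singleton_zero]
  grind

theorem symA_singleton_zero_add_symG (α : ℝ) (Ω : Finset (Fin K)) :
    symA α ({0} : Finset (Fin K)) + symG α Ω = max (2 - α) α := by
  rw [symA_singleton_zero, symG]
  grind

theorem sum_le_symE {α : ℝ} {R : Fin K → ℝ} {Υ : Finset (Fin K)} (hΥ : ∑ j ∈ Υ, R j ≤ 1)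
    (hR0 : R 0 ≤ max (1 - α) α) : ∑ j ∈ Υ, R j ≤ symE α Υ := by
  by_cases hne : Υ = {0}
  · rwa [hne, symE_singleton_zero, sum_singleton]
  · calc ∑ j ∈ Υ, R j ≤ 1 := hΥ
      _ = symA α Υ := (symA_of_ne_singleton_zero α hne).symm
      _ ≤ symE α Υ := le_max_left _ _

theorem sum_add_sum_le_symA_add_symG {α : ℝ} {R : Fin K → ℝ} {Υ Ω : Finset (Fin K)}
    (hΥ : ∑ j ∈ Υ, R j ≤ 1) (hΩ : ∑ j ∈ Ω, R j ≤ 1)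
    (hR0Ω : R 0 + ∑ j ∈ Ω, R j ≤ max (2 - α) α) :
    ∑ j ∈ Υ, R j + ∑ j ∈ Ω, R j ≤ symA α Υ + symG α Ω := by
  by_cases hne : Υ = {0}
  · rwa [hne, symA_singleton_zero_add_symG, sum_singleton]
  · rw [symA_of_ne_singleton_zero α hne]
    exact add_le_add hΥ (hΩ.trans (le_max_left 1 α))

theorem genericRegion_sym_iff {α : ℝ} {R : Fin K → ℝ} (hR : ∀ j, 0 ≤ R j) :
    GenericRegion R R (symA α) symB (symE α) (symG α) (symA α) symB (symE α) (symG α) ↔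
      ∑ j, R j ≤ 1 ∧ R 0 ≤ max (1 - α) α ∧ R 0 + ∑ j, R j ≤ max (2 - α) α := by
  rw [genericRegion_self_iff]
  constructor
  · rintro ⟨hB, hE, hAG⟩
    have h0 : (0 : Fin K) ∈ ({0} : Finset (Fin K)) := mem_singleton_self 0
    refine ⟨hB univ univ_nonempty, ?_, ?_⟩
    · simpa only [sum_singleton, symE_singleton_zero] using hE {0} h0
    · simpa only [sum_singleton, symA_singleton_zero_add_symG] using hAG {0} univ h0 univ_nonempty
  · rintro ⟨hB, hE, hAG⟩
    have hle_total (S : Finset (Fin K)) : ∑ j ∈ S, R j ≤ ∑ j, R j := sum_le_univ_sum_of_nonneg hR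
    have hle_one (S : Finset (Fin K)) : ∑ j ∈ S, R j ≤ 1 := (hle_total S).trans hB
    exact ⟨fun Ω _ ↦ hle_one Ω, fun Υ _ ↦ sum_le_symE (hle_one Υ) hE,
      fun Υ Ω _ _ ↦ sum_add_sum_le_symA_add_symG (hle_one Υ) (hle_one Ω)
        ((add_le_add_right (hle_total Ω) (R 0)).trans hAG)⟩

theorem genericRegion_const_iff_le_min {α d : ℝ} (hd : 0 ≤ d) :
    GenericRegion (na := K) (nb := K) (fun _ ↦ d) (fun _ ↦ d)
        (symA α) symB (symE α) (symG α) (symA α) symB (symE α) (symG α) ↔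
      d ≤ min (min (1 / (K : ℝ)) (max (2 - α) α / (K + 1))) (max (1 - α) α) := by
  have hK : (0 : ℝ) < K := Nat.cast_pos.2 (NeZero.pos K)
  have htotal : ∑ _j : Fin K, d = K * d := by simp
  have hpair : d + K * d = (K + 1) * d := by ring
  rw [genericRegion_sym_iff fun _ ↦ hd, htotal, hpair, le_min_iff, le_min_iff, le_div_iff₀' hK,
    le_div_iff₀' (by positivity), and_assoc, and_comm (a := d ≤ _)]

end SymmetricSetFunctions

theorem symmetric_gdof_mac_ic_mac_general (K : ℕ) [NeZero K] (α : ℝ) :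
    IsGreatest {d : ℝ | 0 ≤ d ∧
        GenericRegion (na := K) (nb := K) (fun _ ↦ d) (fun _ ↦ d)
          (symA α) symB (symE α) (symG α) (symA α) symB (symE α) (symG α)}
      (min (min (1 / (K : ℝ)) (max (2 - α) α / (K + 1))) (max (1 - α) α)) := by
  have hpair : 0 ≤ max (2 - α) α := by grind
  have hsingle : 0 ≤ max (1 - α) α := by grind
  have hmin : 0 ≤ min (min (1 / (K : ℝ)) (max (2 - α) α / (K + 1))) (max (1 - α) α) :=
    le_min (le_min (by positivity) (by positivity)) hsingle
  exact ⟨⟨hmin, (genericRegion_const_iff_le_min hmin).2 le_rfl⟩,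
    fun _ hd ↦ (genericRegion_const_iff_le_min hd.1).1 hd.2⟩

/-- the symmetric GDoF of the `K`-user-per-cell symmetric
Gaussian MAC-IC-MAC (`K = k + 2 ≥ 2`):  the supremum of all `d ≥ 0` such that
the all-equal tuple `(d,…,d)` satisfies the seven generic inequality families
for the symmetric GDoF set functions equals
`min{1/K, max{2−α, α}/(K+1)}` (equivalently, the V-shaped curve with flat
shoulders: `1/K` for `α ≤ 1−1/K`, `(2−α)/(K+1)` for `1−1/K ≤ α ≤ 1`,
`α/(K+1)` for `1 ≤ α ≤ 1+1/K`, and `1/K` for `α ≥ 1+1/K`). -/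
theorem symmetric_gdof_mac_ic_mac
    (k : ℕ) (α : ℝ) (hα : 0 ≤ α) :
    sSup {d : ℝ | 0 ≤ d ∧
        GenericRegion (na := k + 2) (nb := k + 2)
          (fun _ => d) (fun _ => d)
          (symA α) symB (symE α) (symG α)
          (symA α) symB (symE α) (symG α)}
      = min (1 / ((k : ℝ) + 2))
          (max (2 - α) α / (((k : ℝ) + 2) + 1)) := by
  have hsingle := one_div_natCast_le_max_one_sub_self (Nat.le_add_left 2 k) α
  refine (symmetric_gdof_mac_ic_mac_general (k + 2) α).csSup_eq.trans ?_
  rw [min_eq_left (min_le_of_left_le hsingle), Nat.cast_add, Nat.cast_ofNat]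
end

section
/- For α ≥ 0 define d_IC(α) = min{1, max{α, 1−α}, max{α/2, 1−α/2}} (the symmetric GDoF per user of the two-user Gaussian interference channel) and d₂(α) = min{1/2, max{2−α, α}/3} (the symmetric GDoF per user of the (2,2) Gaussian MAC-IC-MAC). Then for every α ≥ 0, 2·d_IC(α)/(d_IC(α)+1) ≤ 2·d₂(α), and the inequality is strict for every α ∈ (0,1) ∪ (1,2); equality holds at α = 0, α = 1, and for all α ≥ 2. Hence time sharing between the interfering and non-interfering transmitters within each cell is GDoF-suboptimal for the MAC-IC-MAC. -/
/-- Symmetric GDoF per user of the two-user Gaussian interference channel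
(the Etkin–Tse–Wang "W-curve"). -/
noncomputable def dIC (α : ℝ) : ℝ :=
  min 1 (min (max α (1 - α)) (max (α / 2) (1 - α / 2)))

/-- Symmetric GDoF per user of the `(2,2)` Gaussian MAC-IC-MAC. -/
noncomputable def d2 (α : ℝ) : ℝ :=
  min (1 / 2) (max (2 - α) α / 3)

/-!
Write `m = max (2 - α) α`, so that `m ≥ 1` with equality only at `α = 1`. Then
`d₂ = min (1/2) (m/3)` and `d_IC ≤ min 1 (m/2)`. Since `x ↦ x / (x + 1)` is increasing, time
sharing gives each transmitter at most `1/2` (from `d_IC ≤ 1`) and at most `m / (m + 2) ≤ m / 3`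
(from `d_IC ≤ m/2` and `m ≥ 1`). The first bound is strict unless `d_IC = 1`, which happens exactly
outside `(0, 2)`, where also `d₂ = 1/2`; the second is strict unless `α = 1`, where both sides
equal `1/3`.
-/

lemma strictMonoOn_div_add_one {K : Type*} [Field K] [LinearOrder K] [IsStrictOrderedRing K] :
    StrictMonoOn (fun x : K => x / (x + 1)) (Set.Ioi (-1)) := by
  intro x hx y hy hxy
  rw [Set.mem_Ioi, neg_lt_iff_pos_add] at hx hy
  rw [div_lt_div_iff₀ hx hy]
  linarith

lemma half_div_half_add_one {K : Type*} [Field K] [NeZero (2 : K)] (m : K) :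
    m / 2 / (m / 2 + 1) = m / (m + 2) := by
  rw [div_add_one two_ne_zero, div_div_div_cancel_right₀ two_ne_zero]

section OrderedRing

variable {R : Type*} [CommRing R] [LinearOrder R] [IsStrictOrderedRing R]

lemma one_le_max_two_sub (a : R) : 1 ≤ max (2 - a) a := by
  linarith [le_max_left (2 - a) a, le_max_right (2 - a) a]

lemma one_lt_max_two_sub {a : R} (ha : a ≠ 1) : 1 < max (2 - a) a := by
  rcases ha.lt_or_gt with h | h
  · exact lt_max_of_lt_left (by linarith)
  · exact lt_max_of_lt_right h

end OrderedRing

lemma dIC_pos (α : ℝ) : 0 < dIC α := by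
  refine lt_min one_pos (lt_min ?_ ?_) <;> rw [lt_max_iff] <;> by_contra! h <;> linarith

lemma dIC_le_one (α : ℝ) : dIC α ≤ 1 := min_le_left _ _

lemma dIC_le_half_max (α : ℝ) : dIC α ≤ max (2 - α) α / 2 := by
  refine (min_le_right _ _).trans ((min_le_right _ _).trans (max_le ?_ ?_))
  · linarith [le_max_right (2 - α) α]
  · linarith [le_max_left (2 - α) α]

lemma dIC_eq_one_iff {α : ℝ} : dIC α = 1 ↔ α ≤ 0 ∨ 2 ≤ α := by
  rw [dIC, min_eq_left_iff, le_min_iff, le_max_iff, le_max_iff]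
  grind

lemma d2_eq_half {α : ℝ} (hα : α ≤ 0 ∨ 2 ≤ α) : d2 α = 1 / 2 := by
  have two_le_max : 2 ≤ max (2 - α) α := le_max_iff.2 (hα.imp_left fun h => by linarith)
  exact min_eq_left (by linarith)

lemma neg_one_lt_dIC (α : ℝ) : -1 < dIC α := by linarith [dIC_pos α]

lemma dIC_div_add_one_le_half (α : ℝ) : dIC α / (dIC α + 1) ≤ 1 / 2 := by
  rw [← one_add_one_eq_two]
  exact strictMonoOn_div_add_one.monotoneOn (neg_one_lt_dIC α) (by norm_num) (dIC_le_one α)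

lemma dIC_div_add_one_lt_half {α : ℝ} (h₀ : 0 < α) (h₂ : α < 2) :
    dIC α / (dIC α + 1) < 1 / 2 := by
  have dIC_lt_one : dIC α < 1 :=
    (dIC_le_one α).lt_of_ne (mt dIC_eq_one_iff.1 (not_or.2 ⟨h₀.not_ge, h₂.not_ge⟩))
  rw [← one_add_one_eq_two]
  exact strictMonoOn_div_add_one (neg_one_lt_dIC α) (by norm_num) dIC_lt_one

lemma dIC_div_add_one_le_max_div (α : ℝ) :
    dIC α / (dIC α + 1) ≤ max (2 - α) α / (max (2 - α) α + 2) := by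
  rw [← half_div_half_add_one]
  exact strictMonoOn_div_add_one.monotoneOn (neg_one_lt_dIC α)
    ((neg_one_lt_dIC α).trans_le (dIC_le_half_max α)) (dIC_le_half_max α)

lemma dIC_div_add_one_le_d2 (α : ℝ) : dIC α / (dIC α + 1) ≤ d2 α := by
  have one_le_max := one_le_max_two_sub α
  refine le_min (dIC_div_add_one_le_half α) ((dIC_div_add_one_le_max_div α).trans ?_)
  exact div_le_div_of_nonneg_left (by linarith) three_pos (by linarith)

lemma dIC_div_add_one_lt_d2 {α : ℝ} (h₀ : 0 < α) (h₁ : α ≠ 1) (h₂ : α < 2) :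
    dIC α / (dIC α + 1) < d2 α := by
  have one_lt_max := one_lt_max_two_sub h₁
  refine lt_min (dIC_div_add_one_lt_half h₀ h₂) ((dIC_div_add_one_le_max_div α).trans_lt ?_)
  exact div_lt_div_of_pos_left (by linarith) three_pos (by linarith)

lemma dIC_div_add_one_eq_d2_iff {α : ℝ} :
    dIC α / (dIC α + 1) = d2 α ↔ α ≤ 0 ∨ α = 1 ∨ 2 ≤ α := by
  constructor
  · intro h
    by_contra! ⟨h₀, h₁, h₂⟩
    exact (dIC_div_add_one_lt_d2 h₀ h₁ h₂).ne h
  · have eq_of_outside (hα : α ≤ 0 ∨ 2 ≤ α) : dIC α / (dIC α + 1) = d2 α := by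
      rw [dIC_eq_one_iff.2 hα, d2_eq_half hα, one_add_one_eq_two]
    rintro (h | rfl | h)
    · exact eq_of_outside (.inl h)
    · norm_num [dIC, d2]
    · exact eq_of_outside (.inr h)

theorem time_sharing_suboptimal_general (α : ℝ) :
    2 * dIC α / (dIC α + 1) ≤ 2 * d2 α ∧
      (2 * dIC α / (dIC α + 1) = 2 * d2 α ↔ α ≤ 0 ∨ α = 1 ∨ 2 ≤ α) := by
  rw [mul_div_assoc, mul_le_mul_iff_right₀ two_pos, mul_right_inj' two_ne_zero]
  exact ⟨dIC_div_add_one_le_d2 α, dIC_div_add_one_eq_d2_iff⟩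

/-- time sharing between the interfering and non-interfering
transmitters of each cell is GDoF-suboptimal for the `(2,2)` MAC-IC-MAC:
for every `α ≥ 0` the time-sharing per-cell sum GDoF `2·d_IC(α)/(d_IC(α)+1)`
is at most the fundamental per-cell sum GDoF `2·d₂(α)`, strictly so for
`α ∈ (0,1) ∪ (1,2)`, with equality at `α = 0`, `α = 1` and all `α ≥ 2`. -/
theorem time_sharing_suboptimal :
    (∀ α : ℝ, 0 ≤ α → 2 * dIC α / (dIC α + 1) ≤ 2 * d2 α) ∧
    (∀ α : ℝ, (0 < α ∧ α < 1) ∨ (1 < α ∧ α < 2) →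
      2 * dIC α / (dIC α + 1) < 2 * d2 α) ∧
    (2 * dIC 0 / (dIC 0 + 1) = 2 * d2 0) ∧
    (2 * dIC 1 / (dIC 1 + 1) = 2 * d2 1) ∧
    (∀ α : ℝ, 2 ≤ α → 2 * dIC α / (dIC α + 1) = 2 * d2 α) := by
  have eq_iff (α : ℝ) := (time_sharing_suboptimal_general α).2
  refine ⟨fun α _ => (time_sharing_suboptimal_general α).1, fun α hα => ?_,
    (eq_iff 0).2 (by norm_num), (eq_iff 1).2 (by norm_num), fun α hα => (eq_iff α).2 (by simp [hα])⟩
  exact (time_sharing_suboptimal_general α).1.lt_of_ne (mt (eq_iff α).1 (by grind))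
end

section
/- Fix a real α ≥ 0, let K_a = K_b = 1 (a single, interfering, user per cell), and let both cells have the symmetric GDoF set functions a = (1−α)⁺, b = 1, e = max{(1−α)⁺, α}, g = max{1, α} (each defined on the unique admissible subset {0}). Then the supremum of all d ≥ 0 such that the pair (d, d) satisfies the seven generic inequality families equals min{1, max{α, 1−α}, max{α/2, 1−α/2}}, i.e., the symmetric GDoF 'W-curve' of the two-user Gaussian interference channel of Etkin, Tse and Wang is recovered as the K = 1 case of the MAC-IC-MAC. -/
/-!
With one user per cell and equal set functions, a diagonal pair `(d, d)` faces the bounds `d ≤ b`,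
`2 d ≤ 2 e`, `2 d ≤ a + g` and `3 d ≤ a + g + e`. The last is the sum of the bounds
`2 d ≤ a + g` and `d ≤ e`, so the admissible `d ≥ 0` form the interval from `0` to
`min b (min e ((a + g) / 2))`. The W-curve is this endpoint, since the positive parts satisfy
`max c x = max (c - x) 0 + x`.
-/

open Finset

section PositiveParts

theorem max_self_sub_nonneg {G : Type*} [AddCommGroup G] [LinearOrder G] [IsOrderedAddMonoid G]
    {c : G} (hc : 0 ≤ c) (x : G) : 0 ≤ max x (c - x) := by
  rcases le_total 0 x with hx | hx
  · exact le_max_of_le_left hx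
  · exact le_max_of_le_right (sub_nonneg.2 (hx.trans hc))

theorem max_max_sub_zero_self {G : Type*} [AddCommGroup G] [LinearOrder G] [IsOrderedAddMonoid G]
    {c : G} (hc : 0 ≤ c) (x : G) : max (max (c - x) 0) x = max x (c - x) := by
  rw [max_right_comm, max_comm (c - x) x, max_eq_left (max_self_sub_nonneg hc x)]

theorem max_sub_zero_add_max_div_two {𝕜 : Type*} [Field 𝕜] [LinearOrder 𝕜]
    [IsStrictOrderedRing 𝕜] (c x : 𝕜) :
    (max (c - x) 0 + max c x) / 2 = max (x / 2) (c - x / 2) := by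
  have max_eq_add : max c x = max (c - x) 0 + x := by
    rw [← max_add_add_right, sub_add_cancel, zero_add]
  calc (max (c - x) 0 + max c x) / 2
      = max (c - x) 0 + x / 2 := by rw [max_eq_add]; ring
    _ = max (c - x + x / 2) (0 + x / 2) := (max_add_add_right _ _ _).symm
    _ = max (x / 2) (c - x / 2) := by rw [max_comm]; congr 1 <;> ring

end PositiveParts

section SingleUser

theorem genericRegion_one_one_iff {Ra Rb : Fin 1 → ℝ}
    {Aa Ba Ea Ga Ab Bb Eb Gb : Finset (Fin 1) → ℝ} :
    GenericRegion Ra Rb Aa Ba Ea Ga Ab Bb Eb Gb ↔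
      Ra 0 ≤ Ba {0} ∧ Rb 0 ≤ Bb {0} ∧
      Ra 0 + Rb 0 ≤ Aa {0} + Gb {0} ∧ Ra 0 + Rb 0 ≤ Ab {0} + Ga {0} ∧
      Ra 0 + Rb 0 ≤ Ea {0} + Eb {0} ∧
      2 * Ra 0 + Rb 0 ≤ Aa {0} + Ga {0} + Eb {0} ∧
      Ra 0 + 2 * Rb 0 ≤ Ab {0} + Gb {0} + Ea {0} := by
  have eq_singleton {s : Finset (Fin 1)} (hs : s.Nonempty) : s = {0} := hs.eq_univ
  have two_mul_add_eq : Ra 0 + Ra 0 + Rb 0 = 2 * Ra 0 + Rb 0 := by ring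
  have add_two_mul_eq : Ra 0 + Rb 0 + Rb 0 = Ra 0 + 2 * Rb 0 := by ring
  rw [← two_mul_add_eq, ← add_two_mul_eq]
  constructor
  · intro h
    simpa only [sum_singleton] using h {0} {0} {0} {0} (mem_singleton_self 0)
      (singleton_nonempty 0) (mem_singleton_self 0) (singleton_nonempty 0)
  · intro h Υa Ωa Υb Ωb hΥa hΩa hΥb hΩb
    obtain rfl := eq_singleton ⟨0, hΥa⟩
    obtain rfl := eq_singleton hΩa
    obtain rfl := eq_singleton ⟨0, hΥb⟩
    obtain rfl := eq_singleton hΩb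
    simpa only [sum_singleton] using h

variable {A B E G : Finset (Fin 1) → ℝ}

theorem genericRegion_one_symmetric_iff {R : Fin 1 → ℝ} :
    GenericRegion R R A B E G A B E G ↔
      R 0 ≤ min (B {0}) (min (E {0}) ((A {0} + G {0}) / 2)) := by
  rw [genericRegion_one_one_iff, le_min_iff, le_min_iff]
  constructor
  · rintro ⟨hB, -, hAG, -, hE, -, -⟩
    exact ⟨hB, by linarith, by linarith⟩
  · rintro ⟨hB, hE, hAG⟩
    refine ⟨hB, hB, ?_, ?_, ?_, ?_, ?_⟩ <;> linarith

theorem isGreatest_genericRegion_one_symmetric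
    (h : 0 ≤ min (B {0}) (min (E {0}) ((A {0} + G {0}) / 2))) :
    IsGreatest {d : ℝ | 0 ≤ d ∧ GenericRegion (fun _ => d) (fun _ => d) A B E G A B E G}
      (min (B {0}) (min (E {0}) ((A {0} + G {0}) / 2))) := by
  simp only [genericRegion_one_symmetric_iff]
  exact isGreatest_Icc h

end SingleUser

theorem symmetric_gdof_K_eq_one_W_curve_general (α : ℝ) :
    IsGreatest {d : ℝ | 0 ≤ d ∧
        GenericRegion (na := 1) (nb := 1)
          (fun _ => d) (fun _ => d)
          (fun _ => max (1 - α) 0) (fun _ => 1)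
          (fun _ => max (max (1 - α) 0) α) (fun _ => max 1 α)
          (fun _ => max (1 - α) 0) (fun _ => 1)
          (fun _ => max (max (1 - α) 0) α) (fun _ => max 1 α)}
      (min 1 (min (max α (1 - α)) (max (α / 2) (1 - α / 2)))) := by
  have he := max_max_sub_zero_self zero_le_one α
  have hag := max_sub_zero_add_max_div_two 1 α
  have nonneg : 0 ≤ min 1 (min (max α (1 - α)) (max (α / 2) (1 - α / 2))) :=
    le_min zero_le_one
      (le_min (max_self_sub_nonneg zero_le_one α) (max_self_sub_nonneg zero_le_one (α / 2)))
  rw [← hag, ← he] at nonneg ⊢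
  exact isGreatest_genericRegion_one_symmetric nonneg

/-- with `K_a = K_b = 1` (a single, interfering, user per
cell) and the constant symmetric GDoF set functions `a = (1−α)⁺`, `b = 1`,
`e = max{(1−α)⁺, α}`, `g = max{1, α}`, the supremum of all `d ≥ 0` such that
`(d, d)` satisfies the seven generic inequality families is the symmetric
GDoF "W-curve" `min{1, max{α, 1−α}, max{α/2, 1−α/2}}` of the two-user
Gaussian interference channel of Etkin, Tse and Wang. -/
theorem symmetric_gdof_K_eq_one_W_curve (α : ℝ) (hα : 0 ≤ α) :
    sSup {d : ℝ | 0 ≤ d ∧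
        GenericRegion (na := 1) (nb := 1)
          (fun _ => d) (fun _ => d)
          (fun _ => max (1 - α) 0) (fun _ => 1)
          (fun _ => max (max (1 - α) 0) α) (fun _ => max 1 α)
          (fun _ => max (1 - α) 0) (fun _ => 1)
          (fun _ => max (max (1 - α) 0) α) (fun _ => max 1 α)}
      = min 1 (min (max α (1 - α)) (max (α / 2) (1 - α / 2))) :=
  (symmetric_gdof_K_eq_one_W_curve_general α).csSup_eq
end
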